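/- If ρ_n = ρ for a fixed ρ ∈ (0,1) and all large n, then for all x, y ∈ ℝ, lim_{n→∞} [P(X ≤ a_n·x + b_n, ρ|X| + √(1-ρ²)·Y ≤ a_n·y + b_n + a_n·ln 2)]^n = Λ(x)·Λ(y), where Λ(t) = exp(-e^{-t}); that is, the normalized componentwise maxima of the half-skew triangular array are asymptotically independent. -/

import Mathlib

open MeasureTheory Filter Real Set ProbabilityTheory Topology

/-!
A Laplace expansion of `P(R cos Θ > u) = (2π)⁻¹ ∫ P(R > u / cos θ) dθ` around `θ = 0` gives
`P(R cos Θ > u) ~ P(R > u) / √(2π u w(u))`, so the projection of the isotropic vector `(X, Y)` in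
any direction has a Gumbel tail with the scaling function of `R`. If the projections in two
distinct directions both exceed `u`, then `R > κ u` for some `κ > 1` depending only on the angle
between them, and `P(R > κ u)` is negligible with respect to `P(R cos Θ > u)`. Inclusion-exclusion
and the Poisson limit therefore make the maxima of projections in finitely many distinct directions
asymptotically independent. With `ρ = cos α`, the half-skew component `ρ|X| + √(1 - ρ²) Y` is the
maximum of the projections in the directions `α` and `π - α`, and neither of these is the direction
`0` of `X`; the shift by `log 2` accounts for the two of them.
-/

/-- The filter `u ↑ e` on the real line, for a right endpoint `e` in the extended reals, so that
finite endpoints and `e = ⊤` are treated together. -/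
noncomputable def leftNhds (e : EReal) : Filter ℝ := comap Real.toEReal (𝓝[<] e)

section LeftNhds

variable {e : EReal}

instance leftNhds_isCountablyGenerated : (leftNhds e).IsCountablyGenerated := by
  unfold leftNhds; infer_instance

lemma leftNhds_hasBasis (he : ⊥ < e) :
    (leftNhds e).HasBasis (fun c : ℝ => (c : EReal) < e)
      (fun c => {u | c < u ∧ (u : EReal) < e}) := by
  refine ((nhdsLT_basis_of_exists_lt ⟨⊥, he⟩).comap _).to_hasBasis (fun c hc => ?_)
    fun c hc => ⟨c, hc, fun u hu => ⟨EReal.coe_lt_coe_iff.1 hu.1, hu.2⟩⟩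
  obtain ⟨d, hcd, hde⟩ := EReal.lt_iff_exists_real_btwn.1 hc
  exact ⟨d, hde, fun u hu => ⟨hcd.trans (EReal.coe_lt_coe_iff.2 hu.1), hu.2⟩⟩

lemma leftNhds_neBot (he : ⊥ < e) : (leftNhds e).NeBot := by
  refine (leftNhds_hasBasis he).neBot_iff.2 fun {c} hc => ?_
  obtain ⟨u, hcu, hue⟩ := EReal.lt_iff_exists_real_btwn.1 hc
  exact ⟨u, EReal.coe_lt_coe_iff.1 hcu, hue⟩

lemma eventually_coe_lt_leftNhds : ∀ᶠ u : ℝ in leftNhds e, (u : EReal) < e :=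
  preimage_mem_comap self_mem_nhdsWithin

lemma leftNhds_top : leftNhds ⊤ = atTop :=
  (leftNhds_hasBasis bot_lt_top).eq_of_same_basis <| by
    simpa [EReal.coe_lt_top, Ioi_def] using (atTop_basis_Ioi (α := ℝ))

lemma leftNhds_coe (x : ℝ) : leftNhds x = 𝓝[<] x :=
  (leftNhds_hasBasis (EReal.bot_lt_coe x)).eq_of_same_basis <| by
    simp only [EReal.coe_lt_coe_iff]
    exact nhdsLT_basis x

lemma exists_eq_leftNhds {F : ℝ → ℝ} {l : Filter ℝ} {x₀ : ℝ}
    (h : (l = atTop ∧ ∀ x, F x < 1) ∨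
      (l = 𝓝[<] x₀ ∧ (∀ x < x₀, F x < 1) ∧ ∀ x, x₀ ≤ x → F x = 1)) :
    ∃ e : EReal, l = leftNhds e ∧ ∀ x : ℝ, F x < 1 ↔ (x : EReal) < e := by
  rcases h with ⟨rfl, hF⟩ | ⟨rfl, hlt, heq⟩
  · exact ⟨⊤, leftNhds_top.symm, fun x => iff_of_true (hF x) (EReal.coe_lt_top x)⟩
  · refine ⟨x₀, (leftNhds_coe x₀).symm, fun x => ?_⟩
    rw [EReal.coe_lt_coe_iff]
    exact ⟨fun hx => lt_of_not_ge fun hle => hx.ne (heq x hle), hlt x⟩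

end LeftNhds

/-- `T` is the tail of a distribution with right endpoint `e` in the Gumbel max-domain of
attraction, with scaling function `w`. Only the properties of `T` that matter near `e` are kept; in
particular `T` need not be right-continuous or tend to `1` at `-∞`. -/
structure IsGumbelTail (T w : ℝ → ℝ) (e : EReal) : Prop where
  antitone : Antitone T
  nonneg : ∀ u, 0 ≤ T u
  pos_iff : ∀ u : ℝ, 0 < T u ↔ (u : EReal) < e
  bot_lt : ⊥ < e
  scale_pos : ∀ u, 0 < w u
  tendsto_ratio : ∀ s : ℝ,
    Tendsto (fun u => T (u + s / w u) / T u) (leftNhds e) (𝓝 (Real.exp (-s)))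

namespace IsGumbelTail

variable {T w : ℝ → ℝ} {e : EReal}

section Basic

lemma eventually_pos (h : IsGumbelTail T w e) : ∀ᶠ u in leftNhds e, 0 < T u :=
  eventually_coe_lt_leftNhds.mono fun u hu => (h.pos_iff u).2 hu

lemma eventually_pos_add_div (h : IsGumbelTail T w e) (s : ℝ) :
    ∀ᶠ u in leftNhds e, 0 < T (u + s / w u) := by
  filter_upwards [(h.tendsto_ratio s).eventually_const_lt (Real.exp_pos _), h.eventually_pos]
    with u hratio hu
  exact (div_pos_iff_of_pos_right hu).1 hratio

lemma tendsto_add_div (h : IsGumbelTail T w e) {s : ℝ} (hs : 0 ≤ s) :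
    Tendsto (fun u => u + s / w u) (leftNhds e) (leftNhds e) := by
  refine (leftNhds_hasBasis h.bot_lt).tendsto_right_iff.2 fun c hc => ?_
  filter_upwards [h.eventually_pos_add_div s, (leftNhds_hasBasis h.bot_lt).mem_of_mem hc]
    with u hpos hu
  have hshift : 0 ≤ s / w u := div_nonneg hs (h.scale_pos u).le
  exact ⟨by linarith [hu.1], (h.pos_iff _).1 hpos⟩

lemma ratio_le_ratio (h : IsGumbelTail T w e) (u : ℝ) {s t : ℝ} (hst : s ≤ t) :
    T (u + t / w u) / T u ≤ T (u + s / w u) / T u :=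
  div_le_div_of_nonneg_right
    (h.antitone (by gcongr; exact (h.scale_pos u).le)) (h.nonneg u)

lemma tendsto_ratio_of_tendsto (h : IsGumbelTail T w e) {τ : ℝ → ℝ} {t : ℝ}
    (hτ : Tendsto τ (leftNhds e) (𝓝 t)) :
    Tendsto (fun u => T (u + τ u / w u) / T u) (leftNhds e) (𝓝 (Real.exp (-t))) := by
  have hcont : Tendsto (fun s : ℝ => Real.exp (-s)) (𝓝 t) (𝓝 (Real.exp (-t))) :=
    Continuous.tendsto (by fun_prop) t
  refine tendsto_order.2 ⟨fun A hA => ?_, fun A hA => ?_⟩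
  · obtain ⟨s, hAs, hts⟩ := (((hcont.mono_left nhdsWithin_le_nhds).eventually_const_lt hA).and
      (self_mem_nhdsWithin (s := Ioi t))).exists
    filter_upwards [(h.tendsto_ratio s).eventually_const_lt hAs, hτ.eventually_lt_const hts]
      with u hu hτs
    exact hu.trans_le (h.ratio_le_ratio u hτs.le)
  · obtain ⟨s, hsA, hst⟩ := (((hcont.mono_left nhdsWithin_le_nhds).eventually_lt_const hA).and
      (self_mem_nhdsWithin (s := Iio t))).exists
    filter_upwards [(h.tendsto_ratio s).eventually_lt_const hsA, hτ.eventually_const_lt hst]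
      with u hu hτs
    exact (h.ratio_le_ratio u hτs.le).trans_lt hu

lemma tendsto_zero (h : IsGumbelTail T w e) : Tendsto T (leftNhds e) (𝓝 0) := by
  obtain ⟨c, -, hc⟩ := EReal.lt_iff_exists_real_btwn.1 h.bot_lt
  have := leftNhds_neBot h.bot_lt
  refine tendsto_order.2 ⟨fun A hA => .of_forall fun u => hA.trans_le (h.nonneg u),
    fun A hA => ?_⟩
  have hlim : Tendsto (fun s : ℝ => Real.exp (-s)) atTop (𝓝 0) :=
    Real.tendsto_exp_atBot.comp tendsto_neg_atTop_atBot
  have hcpos : 0 < T c := (h.pos_iff c).2 hc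
  obtain ⟨s, hs⟩ := (hlim.eventually_lt_const (div_pos hA hcpos)).exists
  obtain ⟨u, hratio, hpos, hshift, hcu⟩ := (((h.tendsto_ratio s).eventually_lt_const hs).and
    (h.eventually_pos.and ((h.eventually_pos_add_div s).and
      ((leftNhds_hasBasis h.bot_lt).mem_of_mem hc)))).exists
  filter_upwards [(leftNhds_hasBasis h.bot_lt).mem_of_mem ((h.pos_iff _).1 hshift)] with v hv
  calc T v ≤ T (u + s / w u) := h.antitone hv.1.le
    _ < A / T c * T u := (div_lt_iff₀ hpos).1 hratio
    _ ≤ A / T c * T c := by gcongr; exact h.antitone hcu.1.le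
    _ = A := div_mul_cancel₀ A hcpos.ne'

-- Going `M` scale units to the left multiplies the small number `T u` by at most `exp M + 1`, so
-- it stays below `T 0`, and hence the point reached is still positive.
lemma tendsto_mul_scale_atTop (h : IsGumbelTail T w e) (he : 0 < e) :
    Tendsto (fun u => u * w u) (leftNhds e) atTop := by
  refine tendsto_atTop.2 fun M => ?_
  have hratio := h.tendsto_ratio (-M)
  rw [neg_neg] at hratio
  have hzero : 0 < T 0 / (Real.exp M + 1) := div_pos ((h.pos_iff 0).2 he) (by positivity)
  filter_upwards [hratio.eventually_lt_const (lt_add_one _), h.eventually_pos,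
    h.tendsto_zero.eventually_lt_const hzero] with u hM hpos hu
  have hlt : T (u + -M / w u) < T 0 :=
    ((div_lt_iff₀ hpos).1 hM).trans ((lt_div_iff₀' (by positivity)).1 hu)
  have hle : 0 < u + -M / w u := lt_of_not_ge fun hle => (h.antitone hle).not_gt hlt
  have hw := h.scale_pos u
  rw [neg_div, ← sub_eq_add_neg, sub_pos, div_lt_iff₀ hw] at hle
  exact hle.le

end Basic

section Decay

lemma eventually_add_div_le_half (h : IsGumbelTail T w e) :
    ∀ᶠ u in leftNhds e, T (u + 1 / w u) ≤ 1 / 2 * T u := by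
  have hexp : Real.exp (-1) < 1 / 2 := by linarith [Real.exp_neg_one_lt_d9]
  filter_upwards [(h.tendsto_ratio 1).eventually_lt_const hexp, h.eventually_pos] with u hu hpos
  exact ((div_lt_iff₀ hpos).1 hu).le

-- Two successive steps of one scale unit divide `T` by about `exp 2`, so they cannot reach past a
-- single step of three units, which divides `T` by about `exp 3`.
lemma eventually_inv_scale_add_div_le (h : IsGumbelTail T w e) :
    ∀ᶠ u in leftNhds e, 1 / w (u + 1 / w u) ≤ 2 * (1 / w u) := by
  have htwo : Tendsto (fun u => T (u + 1 / w u + 1 / w (u + 1 / w u)) / T u) (leftNhds e)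
      (𝓝 (Real.exp (-2))) := by
    have hmul := ((h.tendsto_ratio 1).comp (h.tendsto_add_div zero_le_one)).mul
      (h.tendsto_ratio 1)
    rw [← Real.exp_add, show (-1 + -1 : ℝ) = -2 by norm_num] at hmul
    refine hmul.congr' ?_
    filter_upwards [h.eventually_pos_add_div 1] with u hu
    exact div_mul_div_cancel₀ hu.ne'
  have hexp : Real.exp (-3) < Real.exp (-2) := Real.exp_lt_exp.2 (by norm_num)
  filter_upwards [(h.tendsto_ratio 3).eventually_lt htwo hexp, h.eventually_pos] with u hu hpos
  have hlt := h.antitone.reflect_lt ((div_lt_div_iff_of_pos_right hpos).1 hu)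
  have hthree : 3 / w u = 1 / w u + 2 * (1 / w u) := by ring
  linarith

lemma eventually_forall_nat_le (h : IsGumbelTail T w e) :
    ∀ᶠ u in leftNhds e, ∀ k : ℕ, T (u + (2 ^ k - 1) / w u) ≤ (1 / 2) ^ k * T u := by
  have hbasis := leftNhds_hasBasis h.bot_lt
  obtain ⟨c, hc, hstep⟩ := hbasis.eventually_iff.1 (h.eventually_add_div_le_half.and
    (h.eventually_inv_scale_add_div_le.and (h.eventually_pos_add_div 1)))
  filter_upwards [hbasis.mem_of_mem hc] with u hu k
  induction k generalizing u with
  | zero => simp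
  | succ k ih =>
    obtain ⟨hhalf, hscale, hpos⟩ := hstep hu
    set z := u + 1 / w u with hz
    have hcz : c < z := by
      have hw : 0 < 1 / w u := one_div_pos.2 (h.scale_pos u)
      linarith [hu.1]
    have hle : z + (2 ^ k - 1) / w z ≤ u + (2 ^ (k + 1) - 1) / w u := by
      have hk : (0 : ℝ) ≤ 2 ^ k - 1 := sub_nonneg.2 (one_le_pow₀ one_le_two)
      calc z + (2 ^ k - 1) / w z = u + 1 / w u + (2 ^ k - 1) * (1 / w z) := by rw [hz]; ring
        _ ≤ u + 1 / w u + (2 ^ k - 1) * (2 * (1 / w u)) := by gcongr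
        _ = u + (2 ^ (k + 1) - 1) / w u := by ring
    calc T (u + (2 ^ (k + 1) - 1) / w u) ≤ T (z + (2 ^ k - 1) / w z) := h.antitone hle
      _ ≤ (1 / 2) ^ k * T z := ih z ⟨hcz, (h.pos_iff z).1 hpos⟩
      _ ≤ (1 / 2) ^ k * (1 / 2 * T u) := by gcongr
      _ = (1 / 2) ^ (k + 1) * T u := by ring

lemma eventually_forall_le_two_div (h : IsGumbelTail T w e) :
    ∀ᶠ u in leftNhds e, ∀ t : ℝ, 1 ≤ t → T (u + t / w u) ≤ 2 / t * T u := by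
  filter_upwards [h.eventually_forall_nat_le] with u hu t ht
  obtain ⟨k, hkt, htk⟩ := exists_nat_pow_near ht one_lt_two
  have hw := h.scale_pos u
  have hpow : ((1 : ℝ) / 2) ^ k ≤ 2 / t := by
    rw [one_div_pow, div_le_div_iff₀ (by positivity) (by positivity)]
    rw [pow_succ] at htk
    linarith
  calc T (u + t / w u) ≤ T (u + (2 ^ k - 1) / w u) := h.antitone (by gcongr; linarith)
    _ ≤ (1 / 2) ^ k * T u := hu k
    _ ≤ 2 / t * T u := mul_le_mul_of_nonneg_right hpow (h.nonneg u)

lemma exists_forall_ratio_le (h : IsGumbelTail T w e) (s : ℝ) :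
    ∃ K : ℝ, 0 ≤ K ∧
      ∀ᶠ u in leftNhds e, ∀ t : ℝ, 0 ≤ t → T (u + (s + t) / w u) / T u ≤ K / (1 + t) := by
  refine ⟨(Real.exp (-s) + 2) * (2 + |s|), by positivity, ?_⟩
  filter_upwards [h.eventually_forall_le_two_div, h.eventually_pos,
    (h.tendsto_ratio s).eventually_lt_const (lt_add_one _)] with u hdecay hpos hs t ht
  have hexp := Real.exp_pos (-s)
  have habs := abs_nonneg s
  rw [le_div_iff₀ (by linarith)]
  rcases le_or_gt 1 (s + t) with hst | hst
  · have hlin : 1 + t ≤ (s + t) * (2 + |s|) := by nlinarith [neg_abs_le s]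
    calc T (u + (s + t) / w u) / T u * (1 + t) ≤ 2 / (s + t) * ((s + t) * (2 + |s|)) :=
          mul_le_mul ((div_le_iff₀ hpos).2 (hdecay _ hst)) hlin (by linarith) (by positivity)
      _ = 2 * (2 + |s|) := by field_simp
      _ ≤ (Real.exp (-s) + 2) * (2 + |s|) := by gcongr; linarith
  · have hratio := (h.ratio_le_ratio u (le_add_of_nonneg_right ht)).trans hs.le
    exact mul_le_mul (by linarith) (by linarith [neg_abs_le s]) (by linarith) (by linarith)

lemma tendsto_sqrt_mul_tail_mul_zero (h : IsGumbelTail T w e) (he : 0 < e) (s : ℝ) {κ : ℝ}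
    (hκ : 1 < κ) :
    Tendsto (fun u => √(u * w u) * T (κ * (u + s / w u)) / T u) (leftNhds e) (𝓝 0) := by
  have hv := h.tendsto_mul_scale_atTop he
  have hlim : Tendsto (fun u => 4 / (κ - 1) / √(u * w u)) (leftNhds e) (𝓝 0) :=
    (Real.tendsto_sqrt_atTop.comp hv).const_div_atTop _
  refine squeeze_zero' (.of_forall fun u => div_nonneg
    (mul_nonneg (Real.sqrt_nonneg _) (h.nonneg _)) (h.nonneg _)) ?_ hlim
  have hhalf : 0 < (κ - 1) / 2 := by linarith
  filter_upwards [h.eventually_pos, h.eventually_forall_le_two_div, hv.eventually_gt_atTop 0,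
    (hv.const_mul_atTop hhalf).eventually_ge_atTop (max 1 (-(κ * s)))] with u hpos hdecay hv0 hv1
  have hle : T (κ * (u + s / w u)) ≤ T (u + (κ - 1) / 2 * (u * w u) / w u) := by
    have hw := h.scale_pos u
    have hform : κ * (u + s / w u) = u + ((κ - 1) * (u * w u) + κ * s) / w u := by
      field_simp; ring
    rw [hform]
    refine h.antitone ?_
    gcongr
    linarith [(le_max_right _ _).trans hv1]
  calc √(u * w u) * T (κ * (u + s / w u)) / T u
      = √(u * w u) * (T (κ * (u + s / w u)) / T u) := mul_div_assoc ..
    _ ≤ √(u * w u) * (2 / ((κ - 1) / 2 * (u * w u))) := by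
        exact mul_le_mul_of_nonneg_left ((div_le_iff₀ hpos).2
          (hle.trans (hdecay _ ((le_max_left _ _).trans hv1)))) (Real.sqrt_nonneg _)
    _ = 4 / (κ - 1) * (√(u * w u) / (u * w u)) := by field_simp; norm_num
    _ = 4 / (κ - 1) / √(u * w u) := by rw [Real.sqrt_div_self', mul_one_div]

end Decay

section Quantile

variable {b : ℕ → ℝ}

lemma eventually_quantile (h : IsGumbelTail T w e)
    (hb : ∀ n : ℕ, b n = sInf {x | T x < 1 / (n : ℝ)}) :
    ∀ᶠ n : ℕ in atTop, (∀ x < b n, 1 / (n : ℝ) ≤ T x) ∧ ∀ x, b n < x → T x < 1 / (n : ℝ) := by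
  obtain ⟨c, -, hc⟩ := EReal.lt_iff_exists_real_btwn.1 h.bot_lt
  have := leftNhds_neBot h.bot_lt
  filter_upwards [tendsto_one_div_atTop_nhds_zero_nat.eventually_lt_const ((h.pos_iff c).2 hc),
    eventually_gt_atTop 0] with n hnc hn
  have hbdd : BddBelow {x | T x < 1 / (n : ℝ)} :=
    ⟨c, fun x hx => (h.antitone.reflect_lt (hx.trans hnc)).le⟩
  have hne : {x | T x < 1 / (n : ℝ)}.Nonempty :=
    (h.tendsto_zero.eventually_lt_const (by positivity : (0 : ℝ) < 1 / n)).exists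
  rw [hb]
  refine ⟨fun x hx => not_lt.1 fun hlt => (csInf_le hbdd hlt).not_gt hx, fun x hx => ?_⟩
  obtain ⟨y, hy, hyx⟩ := exists_lt_of_csInf_lt hne hx
  exact (h.antitone hyx.le).trans_lt hy

lemma tendsto_quantile (h : IsGumbelTail T w e)
    (hb : ∀ n : ℕ, b n = sInf {x | T x < 1 / (n : ℝ)}) : Tendsto b atTop (leftNhds e) := by
  have := leftNhds_neBot h.bot_lt
  refine (leftNhds_hasBasis h.bot_lt).tendsto_right_iff.2 fun c hc => ?_
  obtain ⟨d, hcd, hde⟩ := EReal.lt_iff_exists_real_btwn.1 hc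
  filter_upwards [h.eventually_quantile hb, eventually_gt_atTop 0,
    tendsto_one_div_atTop_nhds_zero_nat.eventually_lt_const ((h.pos_iff d).2 hde)]
    with n hquantile hn hnd
  obtain ⟨z, hzn, hze⟩ := ((h.tendsto_zero.eventually_lt_const
    (by positivity : (0 : ℝ) < 1 / n)).and eventually_coe_lt_leftNhds).exists
  have hdb : d ≤ b n := not_lt.1 fun hlt => (hquantile.2 d hlt).not_gt hnd
  have hbz : b n ≤ z := not_lt.1 fun hlt => (hquantile.1 z hlt).not_gt hzn
  exact ⟨(EReal.coe_lt_coe_iff.1 hcd).trans_le hdb, (EReal.coe_le_coe_iff.2 hbz).trans_lt hze⟩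

lemma tendsto_nat_mul_quantile (h : IsGumbelTail T w e)
    (hb : ∀ n : ℕ, b n = sInf {x | T x < 1 / (n : ℝ)}) :
    Tendsto (fun n : ℕ => n * T (b n)) atTop (𝓝 1) := by
  have hbe := h.tendsto_quantile hb
  have hexp : Tendsto (fun s : ℝ => Real.exp (-s)) (𝓝 0) (𝓝 1) := by
    simpa using (by fun_prop : Continuous fun s : ℝ => Real.exp (-s)).tendsto 0
  suffices hinv : Tendsto (fun n : ℕ => 1 / (n : ℝ) / T (b n)) atTop (𝓝 1) by
    have := hinv.inv₀ one_ne_zero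
    simpa only [inv_div, div_div_eq_mul_div, div_one, inv_one, mul_comm] using this
  refine tendsto_order.2 ⟨fun A hA => ?_, fun A hA => ?_⟩
  · obtain ⟨s, hAs, hs⟩ := (((hexp.mono_left nhdsWithin_le_nhds).eventually_const_lt hA).and
      (self_mem_nhdsWithin (s := Ioi 0))).exists
    filter_upwards [h.eventually_quantile hb,
      hbe.eventually ((h.tendsto_ratio s).eventually_const_lt hAs)] with n hquantile hn
    refine hn.trans_le (div_le_div_of_nonneg_right (hquantile.2 _ ?_).le (h.nonneg _))
    exact lt_add_of_pos_right _ (div_pos hs (h.scale_pos _))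
  · obtain ⟨s, hsA, hs⟩ := (((hexp.mono_left nhdsWithin_le_nhds).eventually_lt_const hA).and
      (self_mem_nhdsWithin (s := Iio 0))).exists
    filter_upwards [h.eventually_quantile hb,
      hbe.eventually ((h.tendsto_ratio s).eventually_lt_const hsA)] with n hquantile hn
    refine (div_le_div_of_nonneg_right (hquantile.1 _ ?_) (h.nonneg _)).trans_lt hn
    exact add_lt_of_neg_right _ (div_neg_of_neg_of_pos hs (h.scale_pos _))

lemma tendsto_nat_mul_of_tendsto_div (h : IsGumbelTail T w e)
    (hb : ∀ n : ℕ, b n = sInf {x | T x < 1 / (n : ℝ)}) {f : ℝ → ℝ} {c : ℝ}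
    (hf : Tendsto (fun u => f u / T u) (leftNhds e) (𝓝 c)) :
    Tendsto (fun n : ℕ => n * f (b n)) atTop (𝓝 c) := by
  have hbe := h.tendsto_quantile hb
  have hmul := (h.tendsto_nat_mul_quantile hb).mul (hf.comp hbe)
  rw [one_mul] at hmul
  refine hmul.congr' ?_
  filter_upwards [hbe.eventually h.eventually_pos] with n hn
  rw [Function.comp_apply, mul_assoc, mul_div_cancel₀ _ hn.ne']

end Quantile

section Transfer

variable {S r : ℝ → ℝ} {C : ℝ}

lemma eventually_pos_of_tendsto_mul_div (h : IsGumbelTail T w e) (hS : ∀ u, 0 ≤ S u) (hC : 0 < C)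
    (hlim : Tendsto (fun u => r u * S u / T u) (leftNhds e) (𝓝 C)) :
    ∀ᶠ u in leftNhds e, 0 < r u ∧ 0 < S u := by
  filter_upwards [hlim.eventually_const_lt hC, h.eventually_pos] with u hu hpos
  have hmul : 0 < r u * S u := (div_pos_iff_of_pos_right hpos).1 hu
  exact ⟨pos_of_mul_pos_left hmul (hS u), (hS u).lt_of_ne fun h0 => by simp [← h0] at hmul⟩

lemma tendsto_div_of_tendsto_mul_div (h : IsGumbelTail T w e) (hS : ∀ u, 0 ≤ S u) (hC : 0 < C)
    (hlim : Tendsto (fun u => r u * S u / T u) (leftNhds e) (𝓝 C)) {f : ℝ → ℝ} {c : ℝ}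
    (hf : Tendsto (fun u => r u * f u / T u) (leftNhds e) (𝓝 c)) :
    Tendsto (fun u => f u / S u) (leftNhds e) (𝓝 (c / C)) := by
  refine (hf.div hlim hC.ne').congr' ?_
  filter_upwards [h.eventually_pos_of_tendsto_mul_div hS hC hlim, h.eventually_pos]
    with u hu hpos
  rw [Pi.div_apply, div_div_div_cancel_right₀ hpos.ne', mul_div_mul_left _ _ hu.1.ne']

lemma of_tendsto_mul_div (h : IsGumbelTail T w e) (hanti : Antitone S) (hS : ∀ u, 0 ≤ S u)
    (hST : ∀ u, S u ≤ T u) (hC : 0 < C)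
    (hlim : ∀ s, Tendsto (fun u => r u * S (u + s / w u) / T u) (leftNhds e)
      (𝓝 (Real.exp (-s) * C))) :
    IsGumbelTail S w e := by
  have hlim₀ : Tendsto (fun u => r u * S u / T u) (leftNhds e) (𝓝 C) := by simpa using hlim 0
  have := leftNhds_neBot h.bot_lt
  refine ⟨hanti, hS, fun u => ⟨fun hu => (h.pos_iff u).1 (hu.trans_le (hST u)), fun hu => ?_⟩,
    h.bot_lt, h.scale_pos, fun s => ?_⟩
  · obtain ⟨v, hv, huv⟩ := ((h.eventually_pos_of_tendsto_mul_div hS hC hlim₀).and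
      ((leftNhds_hasBasis h.bot_lt).mem_of_mem hu)).exists
    exact hv.2.trans_le (hanti huv.1.le)
  · simpa only [mul_div_cancel_right₀ _ hC.ne'] using
      h.tendsto_div_of_tendsto_mul_div hS hC hlim₀ (hlim s)

end Transfer

end IsGumbelTail

section Laplace

/-- The tail at `t > 0` of `R cos Θ`, where `R` is positive with tail `T` and `Θ` is independent of
`R` and uniformly distributed on `(-π, π)`. -/
noncomputable def projectedTail (T : ℝ → ℝ) (t : ℝ) : ℝ :=
  (2 * π)⁻¹ * ∫ θ in Ioo (-(π / 2)) (π / 2), T (t / Real.cos θ)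

/-- The integrand of `projectedTail T` at `u + s / w u`, relative to `T u`, after the substitution
`θ = φ / √(u * w u)`, which spreads the angles that matter over the whole real line. -/
noncomputable def rescaledIntegrand (T w : ℝ → ℝ) (s u φ : ℝ) : ℝ :=
  (Ioo (-(π / 2)) (π / 2)).indicator (fun θ => T ((u + s / w u) / Real.cos θ))
    (φ / √(u * w u)) / T u

lemma mul_setIntegral_eq_integral_indicator_div {c : ℝ} (hc : 0 ≤ c) {S : Set ℝ}
    (hS : MeasurableSet S) (f : ℝ → ℝ) :
    c * ∫ x in S, f x = ∫ x, S.indicator f (x / c) := by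
  rw [Measure.integral_comp_div, integral_indicator hS, abs_of_nonneg hc, smul_eq_mul]

lemma sqrt_mul_projectedTail_div (T w : ℝ → ℝ) (s u : ℝ) :
    √(u * w u) * projectedTail T (u + s / w u) / T u =
      (2 * π)⁻¹ * ∫ φ, rescaledIntegrand T w s u φ := by
  simp only [rescaledIntegrand]
  rw [integral_div, ← mul_setIntegral_eq_integral_indicator_div (Real.sqrt_nonneg _)
    measurableSet_Ioo, projectedTail]
  ring

lemma add_div_div_eq_add_div {k : ℝ} (hk : k ≠ 0) (u s c : ℝ) :
    (u + s / k) / c = u + ((u * k + s) / c - u * k) / k := by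
  field_simp
  ring

lemma one_sub_cos_eq_mul_sinc_sq (x : ℝ) : 1 - Real.cos x = x ^ 2 / 2 * Real.sinc (x / 2) ^ 2 := by
  rcases eq_or_ne x 0 with rfl | hx
  · simp
  · have hcos : Real.cos x = 1 - 2 * Real.sin (x / 2) ^ 2 := by
      rw [← mul_div_cancel₀ x two_ne_zero, Real.cos_two_mul, Real.cos_sq',
        mul_div_cancel_left₀ _ two_ne_zero]
      ring
    rw [Real.sinc_of_ne_zero (div_ne_zero hx two_ne_zero), hcos]
    field_simp
    ring

lemma tendsto_div_cos_sub (φ s : ℝ) :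
    Tendsto (fun v : ℝ => (v + s) / Real.cos (φ / √v) - v) atTop (𝓝 (s + φ ^ 2 / 2)) := by
  have hangle : Tendsto (fun v : ℝ => φ / √v) atTop (𝓝 0) :=
    Real.tendsto_sqrt_atTop.const_div_atTop φ
  have hcos : Tendsto (fun v : ℝ => Real.cos (φ / √v)) atTop (𝓝 1) := by
    simpa [Function.comp_def] using (Real.continuous_cos.tendsto 0).comp hangle
  have hsinc : Tendsto (fun v : ℝ => Real.sinc (φ / √v / 2)) atTop (𝓝 1) := by
    simpa [Function.comp_def] using
      (Real.continuous_sinc.tendsto (0 / 2)).comp (hangle.div_const 2)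
  have hlim := (((hsinc.pow 2).const_mul (φ ^ 2 / 2)).const_add s).div hcos one_ne_zero
  rw [one_pow, mul_one, div_one] at hlim
  refine hlim.congr' ?_
  filter_upwards [hcos.eventually_const_lt one_pos, eventually_gt_atTop 0] with v hpos hv
  have hform : φ ^ 2 / 2 * Real.sinc (φ / √v / 2) ^ 2 = v * (1 - Real.cos (φ / √v)) := by
    rw [one_sub_cos_eq_mul_sinc_sq, div_pow, Real.sq_sqrt hv.le]
    field_simp
  rw [Pi.div_apply, hform, eq_sub_iff_add_eq, div_add' _ _ _ hpos.ne']
  ring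

lemma le_div_cos_sub {s v θ : ℝ} (hs : 2 * |s| ≤ v) (hθ : θ ∈ Ioo (-(π / 2)) (π / 2)) :
    s + v * (θ / π) ^ 2 ≤ (v + s) / Real.cos θ - v := by
  have hcos := Real.cos_pos_of_mem_Ioo hθ
  have hle : Real.cos θ ≤ 1 - 2 * (θ / π) ^ 2 :=
    (Real.cos_le_one_sub_mul_cos_sq (abs_le.2
      ⟨by linarith [hθ.1, Real.pi_pos], by linarith [hθ.2, Real.pi_pos]⟩)).trans_eq (by ring)
  have hvs : v / 2 ≤ v + s := by linarith [neg_abs_le s]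
  have hinv : 1 + 2 * (θ / π) ^ 2 ≤ 1 / Real.cos θ := by
    rw [le_div_iff₀ hcos]
    nlinarith [sq_nonneg (θ / π)]
  calc s + v * (θ / π) ^ 2 = s + v / 2 * (2 * (θ / π) ^ 2) := by ring
    _ ≤ s + (v + s) * (2 * (θ / π) ^ 2) := by gcongr
    _ = (v + s) * (1 + 2 * (θ / π) ^ 2) - v := by ring
    _ ≤ (v + s) * (1 / Real.cos θ) - v := by
        gcongr
        linarith [abs_nonneg s]
    _ = (v + s) / Real.cos θ - v := by ring

end Laplace

namespace IsGumbelTail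

variable {T w : ℝ → ℝ} {e : EReal}

section Laplace

lemma exists_forall_norm_rescaledIntegrand_le (h : IsGumbelTail T w e) (he : 0 < e) (s : ℝ) :
    ∃ K : ℝ, ∀ᶠ u in leftNhds e, ∀ φ : ℝ,
      ‖rescaledIntegrand T w s u φ‖ ≤ K * (1 + (φ / π) ^ 2)⁻¹ := by
  obtain ⟨K, hK, hdecay⟩ := h.exists_forall_ratio_le s
  refine ⟨K, ?_⟩
  have hv := h.tendsto_mul_scale_atTop he
  filter_upwards [hdecay, hv.eventually_ge_atTop (2 * |s|), hv.eventually_gt_atTop 0]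
    with u hu hvs hv₀ φ
  rw [rescaledIntegrand]
  by_cases hθ : φ / √(u * w u) ∈ Ioo (-(π / 2)) (π / 2)
  · have hφ : u * w u * (φ / √(u * w u) / π) ^ 2 = (φ / π) ^ 2 := by
      rw [div_right_comm, div_pow, Real.sq_sqrt hv₀.le, mul_div_cancel₀ _ hv₀.ne']
    have hshift := le_div_cos_sub hvs hθ
    rw [hφ] at hshift
    rw [indicator_of_mem hθ, Real.norm_of_nonneg (div_nonneg (h.nonneg _) (h.nonneg _)),
      add_div_div_eq_add_div (h.scale_pos u).ne', ← div_eq_mul_inv]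
    exact (h.ratio_le_ratio u hshift).trans (hu _ (sq_nonneg _))
  · rw [indicator_of_notMem hθ, zero_div, norm_zero]
    positivity

lemma tendsto_rescaledIntegrand (h : IsGumbelTail T w e) (he : 0 < e) (s φ : ℝ) :
    Tendsto (fun u => rescaledIntegrand T w s u φ) (leftNhds e)
      (𝓝 (Real.exp (-(s + φ ^ 2 / 2)))) := by
  have hv := h.tendsto_mul_scale_atTop he
  refine (h.tendsto_ratio_of_tendsto ((tendsto_div_cos_sub φ s).comp hv)).congr' ?_
  have hangle : Tendsto (fun u => φ / √(u * w u)) (leftNhds e) (𝓝 0) :=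
    (Real.tendsto_sqrt_atTop.comp hv).const_div_atTop φ
  filter_upwards [hangle.eventually_mem
    (Ioo_mem_nhds (neg_lt_zero.2 Real.pi_div_two_pos) Real.pi_div_two_pos)] with u hu
  rw [rescaledIntegrand, indicator_of_mem hu, add_div_div_eq_add_div (h.scale_pos u).ne',
    Function.comp_apply]

lemma measurable_rescaledIntegrand (h : IsGumbelTail T w e) (s u : ℝ) :
    Measurable (rescaledIntegrand T w s u) := by
  have hT := h.antitone.measurable
  have hind : Measurable ((Ioo (-(π / 2)) (π / 2)).indicator
      fun θ => T ((u + s / w u) / Real.cos θ)) :=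
    (hT.comp (by fun_prop)).indicator measurableSet_Ioo
  exact (hind.comp (by fun_prop)).div_const _

lemma tendsto_sqrt_mul_projectedTail_div (h : IsGumbelTail T w e) (he : 0 < e) (s : ℝ) :
    Tendsto (fun u => √(u * w u) * projectedTail T (u + s / w u) / T u) (leftNhds e)
      (𝓝 (Real.exp (-s) * (√(2 * π))⁻¹)) := by
  obtain ⟨K, hK⟩ := h.exists_forall_norm_rescaledIntegrand_le he s
  have hval : (2 * π)⁻¹ * ∫ φ : ℝ, Real.exp (-(s + φ ^ 2 / 2)) =
      Real.exp (-s) * (√(2 * π))⁻¹ := by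
    have hgauss : ∫ φ : ℝ, Real.exp (-(s + φ ^ 2 / 2)) = Real.exp (-s) * √(2 * π) := by
      calc ∫ φ : ℝ, Real.exp (-(s + φ ^ 2 / 2))
          = ∫ φ : ℝ, Real.exp (-s) * Real.exp (-(1 / 2) * φ ^ 2) := by
            congr with φ
            rw [← Real.exp_add]
            ring_nf
        _ = Real.exp (-s) * √(π / (1 / 2)) := by rw [integral_const_mul, integral_gaussian]
        _ = Real.exp (-s) * √(2 * π) := by ring_nf
    rw [hgauss, mul_left_comm, inv_mul_eq_div, Real.sqrt_div_self]
  simp only [sqrt_mul_projectedTail_div, ← hval]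
  refine (tendsto_integral_filter_of_dominated_convergence _
    (.of_forall fun u => (h.measurable_rescaledIntegrand s u).aestronglyMeasurable)
    (hK.mono fun u hu => .of_forall hu)
    ((integrable_inv_one_add_sq.comp_div Real.pi_ne_zero).const_mul K)
    (.of_forall (h.tendsto_rescaledIntegrand he s))).const_mul _

end Laplace

end IsGumbelTail

section Survival

variable {Ω : Type*} [MeasurableSpace Ω] {μ : Measure Ω}

/-- The survival function `t ↦ P(X > t)` of a real random variable `X`. -/
def survival (μ : Measure Ω) (X : Ω → ℝ) (t : ℝ) : ℝ := μ.real {ω | t < X ω}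

lemma survival_nonneg (X : Ω → ℝ) (t : ℝ) : 0 ≤ survival μ X t := measureReal_nonneg

lemma survival_mono [IsFiniteMeasure μ] {X Y : Ω → ℝ} (h : ∀ᵐ ω ∂μ, X ω ≤ Y ω) (t : ℝ) :
    survival μ X t ≤ survival μ Y t :=
  ENNReal.toReal_mono (measure_ne_top _ _)
    (measure_mono_ae (h.mono fun _ hω (ht : _ < _) => ht.trans_le hω))

lemma survival_antitone [IsFiniteMeasure μ] (X : Ω → ℝ) : Antitone (survival μ X) :=
  fun _ _ hst => measureReal_mono fun _ hω => hst.trans_lt hω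

lemma survival_eq_one_sub [IsProbabilityMeasure μ] {X : Ω → ℝ} (hX : Measurable X) (t : ℝ) :
    survival μ X t = 1 - μ.real {ω | X ω ≤ t} := by
  rw [← probReal_compl_eq_one_sub (measurableSet_le hX measurable_const), survival]
  simp only [compl_ofPred, not_le]

lemma survival_zero_of_ae_pos [IsProbabilityMeasure μ] {R : Ω → ℝ} (hRm : Measurable R)
    (hR : ∀ᵐ ω ∂μ, 0 < R ω) : survival μ R 0 = 1 := by
  have hone : μ {ω | 0 < R ω} = 1 := 
    (mem_ae_iff_prob_eq_one (measurableSet_lt measurable_const hRm)).1 hR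
  rw [survival, measureReal_def, hone, ENNReal.toReal_one]

lemma survival_mul_const {c : ℝ} (hc : 0 < c) (R : Ω → ℝ) (t : ℝ) :
    survival μ (fun ω => R ω * c) t = survival μ R (t / c) := by
  simp only [survival, div_lt_iff₀ hc]

lemma survival_mul_const_of_nonpos [IsFiniteMeasure μ] {R : Ω → ℝ} (hR : ∀ᵐ ω ∂μ, 0 < R ω) {c t : ℝ}
    (hc : c ≤ 0) (ht : 0 < t) :
    survival μ (fun ω => R ω * c) t = 0 := by
  rw [survival, measureReal_eq_zero_iff, measure_eq_zero_iff_ae_notMem]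
  filter_upwards [hR] with ω hω
  exact ((mul_nonpos_of_nonneg_of_nonpos hω.le hc).trans ht.le).not_gt

end Survival

section Rotation

variable {Ω : Type*} [MeasurableSpace Ω]

/-- `(R, Θ)` are the polar coordinates of a rotationally invariant random vector of the plane that
almost surely does not vanish. -/
structure IsIsotropic (μ : Measure Ω) (R Θ : Ω → ℝ) : Prop where
  measurable_radius : Measurable R
  measurable_angle : Measurable Θ
  radius_pos : ∀ᵐ ω ∂μ, 0 < R ω
  map_angle : μ.map Θ = (ENNReal.ofReal (2 * π))⁻¹ • volume.restrict (Ioo (-π) π)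
  indepFun : IndepFun R Θ μ

/-- The coordinate, in the direction of angle `β`, of the vector with polar coordinates
`(R, Θ)`. -/
noncomputable def projection (R Θ : Ω → ℝ) (β : ℝ) (ω : Ω) : ℝ := R ω * Real.cos (Θ ω - β)

variable {μ : Measure Ω} {R Θ : Ω → ℝ}

lemma IsIsotropic.measurable_projection (h : IsIsotropic μ R Θ) (β : ℝ) :
    Measurable (projection R Θ β) := by
  have hR := h.measurable_radius
  have hΘ := h.measurable_angle
  unfold projection
  fun_prop

variable [IsFiniteMeasure μ]

lemma measureReal_prodMk_mem_eq_integral {α β : Type*} [MeasurableSpace α] [MeasurableSpace β]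
    {f : Ω → α} {g : Ω → β} (hf : Measurable f) (hg : Measurable g) (hfg : IndepFun f g μ)
    {A : Set (α × β)} (hA : MeasurableSet A) :
    μ.real {ω | (f ω, g ω) ∈ A} = ∫ y, μ.real {ω | (f ω, y) ∈ A} ∂(μ.map g) := by
  have hslice (y : β) : (μ.map f) ((fun x => (x, y)) ⁻¹' A) = μ {ω | (f ω, y) ∈ A} :=
    Measure.map_apply hf (measurable_prodMk_right hA)
  have hmeas : Measurable fun y => μ {ω | (f ω, y) ∈ A} := by
    simpa only [hslice] using measurable_measure_prodMk_right (μ := μ.map f) hA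
  have hfubini : μ {ω | (f ω, g ω) ∈ A} = ∫⁻ y, μ {ω | (f ω, y) ∈ A} ∂(μ.map g) := by
    calc μ {ω | (f ω, g ω) ∈ A} = μ.map (fun ω => (f ω, g ω)) A :=
          (Measure.map_apply (hf.prodMk hg) hA).symm
      _ = ((μ.map f).prod (μ.map g)) A := by
          rw [(indepFun_iff_map_prod_eq_prod_map_map hf.aemeasurable hg.aemeasurable).1 hfg]
      _ = ∫⁻ y, μ {ω | (f ω, y) ∈ A} ∂(μ.map g) := by
          simp only [Measure.prod_apply_symm hA, hslice]
  rw [measureReal_def, hfubini, ← integral_toReal hmeas.aemeasurable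
    (.of_forall fun y => measure_lt_top _ _)]
  rfl

lemma IsIsotropic.survival_projection_eq_integral (h : IsIsotropic μ R Θ) (β t : ℝ) :
    survival μ (projection R Θ β) t =
      (2 * π)⁻¹ * ∫ θ in -π..π, survival μ (fun ω => R ω * Real.cos θ) t := by
  have hA : MeasurableSet {p : ℝ × ℝ | t < p.1 * Real.cos (p.2 - β)} :=
    measurableSet_lt measurable_const (by fun_prop)
  have hper : Function.Periodic (fun θ => survival μ (fun ω => R ω * Real.cos θ) t) (2 * π) :=
    fun θ => by simp only [Real.cos_add_two_pi]
  have hle : -π ≤ π := by linarith [Real.pi_pos]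
  calc survival μ (projection R Θ β) t
      = ∫ θ, survival μ (fun ω => R ω * Real.cos (θ - β)) t ∂(μ.map Θ) :=
        measureReal_prodMk_mem_eq_integral h.measurable_radius h.measurable_angle h.indepFun hA
    _ = (2 * π)⁻¹ * ∫ θ in -π..π, survival μ (fun ω => R ω * Real.cos (θ - β)) t := by
        rw [h.map_angle, integral_smul_measure, ← integral_Ioc_eq_integral_Ioo,
          ← intervalIntegral.integral_of_le hle, ENNReal.toReal_inv,
          ENNReal.toReal_ofReal Real.two_pi_pos.le, smul_eq_mul]
    _ = (2 * π)⁻¹ * ∫ θ in -π..π, survival μ (fun ω => R ω * Real.cos θ) t := by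
        rw [intervalIntegral.integral_comp_sub_right
          (fun θ => survival μ (fun ω => R ω * Real.cos θ) t) β]
        have hshift := hper.intervalIntegral_add_eq (-π - β) (-π)
        rw [show -π - β + 2 * π = π - β by ring, show -π + 2 * π = π by ring] at hshift
        rw [hshift]

lemma intervalIntegral_survival_mul_cos (hR : ∀ᵐ ω ∂μ, 0 < R ω) {t : ℝ} (ht : 0 < t) :
    ∫ θ in -π..π, survival μ (fun ω => R ω * Real.cos θ) t =
      ∫ θ in Ioo (-(π / 2)) (π / 2), survival μ R (t / Real.cos θ) := by
  have hπ := Real.pi_pos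
  rw [intervalIntegral.integral_of_le (by linarith)]
  calc ∫ θ in Ioc (-π) π, survival μ (fun ω => R ω * Real.cos θ) t
      = ∫ θ in Ioo (-(π / 2)) (π / 2), survival μ (fun ω => R ω * Real.cos θ) t := by
        refine setIntegral_eq_of_subset_of_forall_sdiff_eq_zero measurableSet_Ioc
          (fun θ hθ => ⟨by linarith [hθ.1], by linarith [hθ.2]⟩) fun θ hθ =>
            survival_mul_const_of_nonpos hR ?_ ht
        have hπθ : |θ| ≤ π := abs_le.2 ⟨hθ.1.1.le, hθ.1.2⟩
        have hθπ : π / 2 ≤ |θ| := not_lt.1 fun hlt => hθ.2 (abs_lt.1 hlt)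
        rw [← Real.cos_abs]
        exact Real.cos_nonpos_of_pi_div_two_le_of_le hθπ (by linarith)
    _ = ∫ θ in Ioo (-(π / 2)) (π / 2), survival μ R (t / Real.cos θ) :=
        setIntegral_congr_fun measurableSet_Ioo fun θ hθ =>
          survival_mul_const (Real.cos_pos_of_mem_Ioo hθ) R t

lemma IsIsotropic.survival_projection_eq_projectedTail (h : IsIsotropic μ R Θ) (β : ℝ) {t : ℝ}
    (ht : 0 < t) : survival μ (projection R Θ β) t = projectedTail (survival μ R) t := by
  rw [h.survival_projection_eq_integral, intervalIntegral_survival_mul_cos h.radius_pos ht,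
    projectedTail]

end Rotation

section Directions

lemma abs_cos_half_sub_lt_one {β γ : ℝ} (h : (β : Real.Angle) ≠ γ) :
    |Real.cos ((β - γ) / 2)| < 1 := by
  refine (Real.abs_cos_le_one _).lt_of_ne fun h1 => h ?_
  obtain ⟨k, hk⟩ := Real.abs_cos_eq_one_iff.1 h1
  exact Real.Angle.angle_eq_iff_two_pi_dvd_sub.2 ⟨k, by linarith⟩

lemma exists_one_lt_forall_mul_lt {β γ : ℝ} (h : (β : Real.Angle) ≠ γ) :
    ∃ κ > 1, ∀ r θ m : ℝ, 0 < r → m < r * Real.cos (θ - β) → m < r * Real.cos (θ - γ) →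
      κ * m < r := by
  set c := |Real.cos ((β - γ) / 2)|
  have hc0 : 0 ≤ c := abs_nonneg _
  have hc1 : c < 1 := abs_cos_half_sub_lt_one h
  refine ⟨2 / (1 + c), (one_lt_div (by linarith)).2 (by linarith), fun r θ m hr hβ hγ => ?_⟩
  have hsum : Real.cos (θ - β) + Real.cos (θ - γ) ≤ 2 * c := by
    calc Real.cos (θ - β) + Real.cos (θ - γ)
        = 2 * (Real.cos ((θ - β + (θ - γ)) / 2) * Real.cos ((β - γ) / 2)) := by
          rw [Real.cos_add_cos, ← Real.cos_neg ((β - γ) / 2)]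
          ring_nf
      _ ≤ 2 * c := by
          gcongr
          refine (le_abs_self _).trans ?_
          rw [abs_mul]
          exact mul_le_of_le_one_left hc0 (Real.abs_cos_le_one _)
  rw [div_mul_eq_mul_div, div_lt_iff₀ (by linarith)]
  nlinarith

lemma cos_mul_abs_add_sin_mul_le_iff {α : ℝ} (hα : 0 ≤ Real.cos α) (r θ t : ℝ) :
    Real.cos α * |r * Real.cos θ| + Real.sin α * (r * Real.sin θ) ≤ t ↔
      r * Real.cos (θ - α) ≤ t ∧ r * Real.cos (θ - (π - α)) ≤ t := by
  have hpos : r * Real.cos (θ - α) =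
      Real.cos α * (r * Real.cos θ) + Real.sin α * (r * Real.sin θ) := by
    rw [Real.cos_sub]
    ring
  have hneg : r * Real.cos (θ - (π - α)) =
      Real.cos α * -(r * Real.cos θ) + Real.sin α * (r * Real.sin θ) := by
    rw [Real.cos_sub, Real.cos_pi_sub, Real.sin_pi_sub]
    ring
  rw [hpos, hneg, ← max_le_iff, max_add_add_right, ← mul_max_of_nonneg _ _ hα, abs_eq_max_neg]

/-- The directions of the projections that make up a row of the half-skew array: with
`α = arccos ρ`, the first component of the row is the projection in direction `0`, the second one
is the maximum of the projections in the directions `α` and `π - α`. -/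
noncomputable def halfSkewDirection (ρ : ℝ) : Fin 3 → ℝ := ![0, Real.arccos ρ, π - Real.arccos ρ]

lemma injective_coe_halfSkewDirection {ρ : ℝ} (hρ : ρ ∈ Ioo 0 1) :
    Function.Injective fun i => (halfSkewDirection ρ i : Real.Angle) := by
  have hpos : 0 < Real.arccos ρ := Real.arccos_pos.2 hρ.2
  have hlt : Real.arccos ρ < π / 2 := Real.arccos_lt_pi_div_two.2 hρ.1
  have hmono : StrictMono (halfSkewDirection ρ) :=
    Fin.strictMono_iff_lt_succ.2 <| Fin.forall_fin_two.2
      ⟨hpos, show Real.arccos ρ < π - Real.arccos ρ by linarith⟩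
  have hnonneg (i : Fin 3) : 0 ≤ halfSkewDirection ρ i := hmono.monotone (Fin.zero_le i)
  have hle (i : Fin 3) : halfSkewDirection ρ i ≤ π - Real.arccos ρ := hmono.monotone (Fin.le_last i)
  have htoReal (i : Fin 3) :
      (halfSkewDirection ρ i : Real.Angle).toReal = halfSkewDirection ρ i :=
    Real.Angle.toReal_coe_eq_self_iff.2
      ⟨by linarith [hnonneg i, Real.pi_pos], by linarith [hle i]⟩
  refine Function.Injective.of_comp (f := Real.Angle.toReal) ?_
  simpa only [Function.comp_def, htoReal] using hmono.injective

lemma half_skew_le_iff_forall_halfSkewDirection {ρ : ℝ} (hρ : ρ ∈ Icc 0 1) (r θ s t : ℝ) :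
    (r * Real.cos θ ≤ s ∧ ρ * |r * Real.cos θ| + √(1 - ρ ^ 2) * (r * Real.sin θ) ≤ t) ↔
      ∀ i, r * Real.cos (θ - halfSkewDirection ρ i) ≤ ![s, t, t] i := by
  have hcos : Real.cos (Real.arccos ρ) = ρ := Real.cos_arccos (by linarith [hρ.1]) hρ.2
  have hsplit := cos_mul_abs_add_sin_mul_le_iff (hρ.1.trans_eq hcos.symm) r θ t
  rw [hcos, Real.sin_arccos] at hsplit
  rw [hsplit]
  simp [halfSkewDirection, Fin.forall_fin_succ]

end Directions

section PoissonLimit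

variable {Ω : Type*} [MeasurableSpace Ω] {μ : Measure Ω}

lemma tendsto_mul_measureReal_union [IsFiniteMeasure μ] {κ : Type*} {l : Filter κ} {c : κ → ℝ}
    {A B : κ → Set Ω} {a b : ℝ} (hB : ∀ k, MeasurableSet (B k))
    (ha : Tendsto (fun k => c k * μ.real (A k)) l (𝓝 a))
    (hb : Tendsto (fun k => c k * μ.real (B k)) l (𝓝 b))
    (hab : Tendsto (fun k => c k * μ.real (A k ∩ B k)) l (𝓝 0)) :
    Tendsto (fun k => c k * μ.real (A k ∪ B k)) l (𝓝 (a + b)) := by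
  rw [← sub_zero (a + b)]
  refine ((ha.add hb).sub hab).congr fun k => ?_
  rw [← mul_add, ← measureReal_union_add_inter (hB k)]
  ring

lemma tendsto_mul_measureReal_biUnion [IsFiniteMeasure μ] {ι κ : Type*} {l : Filter κ}
    {c : κ → ℝ} (hc : ∀ k, 0 ≤ c k) {A : ι → κ → Set Ω} {a : ι → ℝ}
    (hA : ∀ i k, MeasurableSet (A i k))
    (ha : ∀ i, Tendsto (fun k => c k * μ.real (A i k)) l (𝓝 (a i)))
    (hinter : ∀ i j, i ≠ j → Tendsto (fun k => c k * μ.real (A i k ∩ A j k)) l (𝓝 0))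
    (s : Finset ι) :
    Tendsto (fun k => c k * μ.real (⋃ i ∈ s, A i k)) l (𝓝 (∑ i ∈ s, a i)) := by
  classical
  induction s using Finset.induction_on with
  | empty => simp [tendsto_const_nhds]
  | insert j s hj ih =>
    simp only [Finset.set_biUnion_insert, Finset.sum_insert hj]
    refine tendsto_mul_measureReal_union
      (fun k => Finset.measurableSet_biUnion s fun i _ => hA i k) (ha j) ih ?_
    have hsum : Tendsto (fun k => ∑ i ∈ s, c k * μ.real (A j k ∩ A i k)) l (𝓝 0) := by
      simpa using tendsto_finsetSum s fun i hi => hinter j i (ne_of_mem_of_not_mem hi hj).symm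
    refine squeeze_zero (fun k => mul_nonneg (hc k) measureReal_nonneg) (fun k => ?_) hsum
    rw [← Finset.mul_sum, inter_iUnion₂]
    exact mul_le_mul_of_nonneg_left (measureReal_biUnion_finset_le _ _) (hc k)

lemma tendsto_measureReal_compl_pow [IsProbabilityMeasure μ] {B : ℕ → Set Ω} {b : ℝ}
    (hB : ∀ n, MeasurableSet (B n)) (hb : Tendsto (fun n : ℕ => n * μ.real (B n)) atTop (𝓝 b)) :
    Tendsto (fun n => μ.real (B n)ᶜ ^ n) atTop (𝓝 (Real.exp (-b))) := by
  refine (Real.tendsto_one_add_pow_exp_of_tendsto (g := fun n => -μ.real (B n)) ?_).congr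
    fun n => by rw [probReal_compl_eq_one_sub (hB n), sub_eq_add_neg]
  simpa only [mul_neg] using hb.neg

end PoissonLimit

section IsotropicMaxima

variable {Ω : Type*} [MeasurableSpace Ω] {μ : Measure Ω} [IsProbabilityMeasure μ] {R Θ : Ω → ℝ}
  {w : ℝ → ℝ} {e : EReal}

lemma IsIsotropic.isGumbelTail_radius (hP : IsIsotropic μ R Θ) (hw : ∀ u, 0 < w u)
    (he : ∀ x : ℝ, μ.real {ω | R ω ≤ x} < 1 ↔ (x : EReal) < e)
    (hratio : ∀ s : ℝ, Tendsto (fun u => (1 - μ.real {ω | R ω ≤ u + s / w u}) /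
      (1 - μ.real {ω | R ω ≤ u})) (leftNhds e) (𝓝 (Real.exp (-s)))) :
    IsGumbelTail (survival μ R) w e := by
  have hpos (u : ℝ) : 0 < survival μ R u ↔ (u : EReal) < e := by
    rw [survival_eq_one_sub hP.measurable_radius, sub_pos, he]
  have he₀ : ((0 : ℝ) : EReal) < e :=
    (hpos 0).1 (by simp [survival_zero_of_ae_pos hP.measurable_radius hP.radius_pos])
  exact
    { antitone := survival_antitone R
      nonneg := survival_nonneg R
      pos_iff := hpos
      bot_lt := bot_le.trans_lt he₀
      scale_pos := hw
      tendsto_ratio := by simpa only [survival_eq_one_sub hP.measurable_radius] using hratio }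

namespace IsGumbelTail

section Projection

variable (h : IsGumbelTail (survival μ R) w e) (hP : IsIsotropic μ R Θ)

include h hP

lemma endpoint_pos : 0 < e :=
  (h.pos_iff 0).1 (by simp [survival_zero_of_ae_pos hP.measurable_radius hP.radius_pos])

lemma tendsto_sqrt_mul_survival_projection_div (β s : ℝ) :
    Tendsto (fun u => √(u * w u) * survival μ (projection R Θ β) (u + s / w u) / survival μ R u)
      (leftNhds e) (𝓝 (Real.exp (-s) * (√(2 * π))⁻¹)) := by
  have he := h.endpoint_pos hP
  refine (h.tendsto_sqrt_mul_projectedTail_div he s).congr' ?_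
  filter_upwards [(h.tendsto_mul_scale_atTop he).eventually_gt_atTop (-s)] with u hu
  have hpos : 0 < u + s / w u := by
    have hw := h.scale_pos u
    rw [← mul_pos_iff_of_pos_right hw, add_mul, div_mul_cancel₀ _ hw.ne']
    linarith
  rw [hP.survival_projection_eq_projectedTail β hpos]

lemma isGumbelTail_projection (β : ℝ) : IsGumbelTail (survival μ (projection R Θ β)) w e := by
  refine h.of_tendsto_mul_div (survival_antitone _) (survival_nonneg _) (survival_mono ?_)
    (by positivity) (h.tendsto_sqrt_mul_survival_projection_div hP β)
  filter_upwards [hP.radius_pos] with ω hω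
  exact mul_le_of_le_one_right hω.le (Real.cos_le_one _)

lemma tendsto_sqrt_mul_measureReal_inter_div {β γ : ℝ} (hβγ : (β : Real.Angle) ≠ γ) (s t : ℝ) :
    Tendsto (fun u => √(u * w u) * μ.real ({ω | u + s / w u < projection R Θ β ω} ∩
      {ω | u + t / w u < projection R Θ γ ω}) / survival μ R u) (leftNhds e) (𝓝 0) := by
  obtain ⟨κ, hκ, hlt⟩ := exists_one_lt_forall_mul_lt hβγ
  have he := h.endpoint_pos hP
  refine squeeze_zero (fun u => by positivity [h.nonneg u]) (fun u => ?_)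
    (h.tendsto_sqrt_mul_tail_mul_zero he (min s t) hκ)
  gcongr
  · exact h.nonneg u
  refine ENNReal.toReal_mono (measure_ne_top _ _) (measure_mono_ae ?_)
  filter_upwards [hP.radius_pos] with ω hω ⟨hβ, hγ⟩
  have hw := (h.scale_pos u).le
  refine hlt (R ω) (Θ ω) _ hω (lt_of_le_of_lt ?_ hβ) (lt_of_le_of_lt ?_ hγ)
  · gcongr; exact min_le_left s t
  · gcongr; exact min_le_right s t

end Projection

end IsGumbelTail

lemma IsIsotropic.tendsto_measureReal_projection_le_pow (hP : IsIsotropic μ R Θ)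
    (h : IsGumbelTail (survival μ R) w e) {b : ℕ → ℝ} {β₀ : ℝ}
    (hb : ∀ n : ℕ, b n = sInf {x | survival μ (projection R Θ β₀) x < 1 / (n : ℝ)})
    {ι : Type*} [Fintype ι] {β : ι → ℝ} (hβ : Function.Injective fun i => (β i : Real.Angle))
    (x : ι → ℝ) :
    Tendsto (fun n : ℕ => μ.real {ω | ∀ i, projection R Θ (β i) ω ≤ b n + x i / w (b n)} ^ n)
      atTop (𝓝 (∏ i, Real.exp (-Real.exp (-x i)))) := by
  set A : ι → ℕ → Set Ω := fun i n => {ω | b n + x i / w (b n) < projection R Θ (β i) ω} with hA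
  have hmeas (i : ι) (n : ℕ) : MeasurableSet (A i n) :=
    measurableSet_lt measurable_const (hP.measurable_projection _)
  have hproj := h.isGumbelTail_projection hP β₀
  have hnorm : Tendsto (fun u => √(u * w u) * survival μ (projection R Θ β₀) u / survival μ R u)
      (leftNhds e) (𝓝 (√(2 * π))⁻¹) := by
    simpa using h.tendsto_sqrt_mul_survival_projection_div hP β₀ 0
  have htransfer {f : ℝ → ℝ} {c : ℝ}
      (hf : Tendsto (fun u => √(u * w u) * f u / survival μ R u) (leftNhds e) (𝓝 c)) :
      Tendsto (fun n : ℕ => n * f (b n)) atTop (𝓝 (c / (√(2 * π))⁻¹)) :=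
    hproj.tendsto_nat_mul_of_tendsto_div hb
      (h.tendsto_div_of_tendsto_mul_div (survival_nonneg _) (by positivity) hnorm hf)
  have hsingle (i : ι) : Tendsto (fun n : ℕ => n * μ.real (A i n)) atTop
      (𝓝 (Real.exp (-x i))) := by
    have hlim := htransfer (h.tendsto_sqrt_mul_survival_projection_div hP (β i) (x i))
    rwa [mul_div_cancel_right₀ _ (by positivity)] at hlim
  have hpair (i j : ι) (hij : i ≠ j) :
      Tendsto (fun n : ℕ => n * μ.real (A i n ∩ A j n)) atTop (𝓝 0) := by
    simpa only [zero_div] using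
      htransfer (h.tendsto_sqrt_mul_measureReal_inter_div hP (hβ.ne hij) (x i) (x j))
  have hunion := tendsto_mul_measureReal_biUnion (fun n => Nat.cast_nonneg n) hmeas hsingle hpair
    Finset.univ
  rw [← Real.exp_sum, Finset.sum_neg_distrib]
  refine (tendsto_measureReal_compl_pow
    (fun n => Finset.measurableSet_biUnion _ fun i _ => hmeas i n) hunion).congr fun n => ?_
  congr 2
  ext ω
  simp [hA]

end IsotropicMaxima

lemma exp_neg_exp_neg_add_log_two_sq (y : ℝ) :
    Real.exp (-Real.exp (-(y + Real.log 2))) ^ 2 = Real.exp (-Real.exp (-y)) := by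
  rw [← Real.exp_nat_mul, neg_add, Real.exp_add, Real.exp_neg (Real.log 2), Real.exp_log two_pos]
  push_cast
  ring_nf

lemma prod_exp_neg_exp_neg_add_log_two (x y : ℝ) :
    ∏ i, Real.exp (-Real.exp (-![x, y + Real.log 2, y + Real.log 2] i)) =
      Real.exp (-Real.exp (-x)) * Real.exp (-Real.exp (-y)) := by
  simp [Fin.prod_univ_three, ← exp_neg_exp_neg_add_log_two_sq y, sq, mul_assoc]

theorem maxima_half_skew_gumbel_fixed_rho_independent_general
{Ω : Type*} [MeasurableSpace Ω] (μ : Measure Ω) [IsProbabilityMeasure μ]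
    (R Θ : Ω → ℝ) (hRm : Measurable R) (hΘm : Measurable Θ)
    (hRpos : ∀ᵐ ω ∂μ, 0 < R ω)
    (hΘunif : μ.map Θ = (ENNReal.ofReal (2 * π))⁻¹ • volume.restrict (Ioo (-π) π))
    (hindep : IndepFun R Θ μ)
    (X Y : Ω → ℝ)
    (hX : X = fun ω => R ω * Real.cos (Θ ω))
    (hY : Y = fun ω => R ω * Real.sin (Θ ω))
    (F G : ℝ → ℝ)
    (hF : F = fun x => (μ {ω | R ω ≤ x}).toReal)
    (hG : G = fun x => (μ {ω | X ω ≤ x}).toReal)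
    (w : ℝ → ℝ) (hw : ∀ x, 0 < w x)
    (e : EReal) (hendpoint : ∀ x : ℝ, F x < 1 ↔ (x : EReal) < e)
    (hGumbel : ∀ s : ℝ,
      Tendsto (fun u => (1 - F (u + s / w u)) / (1 - F u)) (leftNhds e) (𝓝 (Real.exp (-s))))
    (b a : ℕ → ℝ)
    (hb : ∀ n : ℕ, b n = sInf {x | 1 - 1 / (n : ℝ) < G x})
    (ha : ∀ n : ℕ, a n = 1 / w (b n))
    (ρ : ℝ) (hρ : ρ ∈ Ioo (0 : ℝ) 1) (x y : ℝ) :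
    Tendsto (fun n : ℕ =>
        ((μ {ω | X ω ≤ a n * x + b n ∧
          ρ * |X ω| + Real.sqrt (1 - ρ ^ 2) * Y ω ≤
            a n * y + b n + a n * Real.log 2}).toReal) ^ n)
      atTop (𝓝 (Real.exp (-Real.exp (-x)) * Real.exp (-Real.exp (-y)))) := by
  subst hX hY hF hG
  have hP : IsIsotropic μ R Θ := ⟨hRm, hΘm, hRpos, hΘunif, hindep⟩
  have hquantile (n : ℕ) : b n = sInf {x | survival μ (projection R Θ 0) x < 1 / (n : ℝ)} := by
    simp only [hb, survival_eq_one_sub (hP.measurable_projection 0), sub_lt_comm, projection,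
      sub_zero, measureReal_def]
  have hlim := hP.tendsto_measureReal_projection_le_pow
    (hP.isGumbelTail_radius hw hendpoint hGumbel) hquantile (injective_coe_halfSkewDirection hρ)
    ![x, y + Real.log 2, y + Real.log 2]
  rw [prod_exp_neg_exp_neg_add_log_two] at hlim
  refine hlim.congr fun n => ?_
  have hvec : (fun i => b n + ![x, y + Real.log 2, y + Real.log 2] i / w (b n)) =
      ![a n * x + b n, a n * y + b n + a n * Real.log 2, a n * y + b n + a n * Real.log 2] := by
    ext i
    fin_cases i <;> simp [ha] <;> ring
  simp only [projection, congrFun hvec, measureReal_def,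
    half_skew_le_iff_forall_halfSkewDirection (Ioo_subset_Icc_self hρ)]

theorem maxima_half_skew_gumbel_fixed_rho_independent
{Ω : Type*} [MeasurableSpace Ω] (μ : Measure Ω) [IsProbabilityMeasure μ]
    (R Θ : Ω → ℝ) (hRm : Measurable R) (hΘm : Measurable Θ)
    (hRpos : ∀ᵐ ω ∂μ, 0 < R ω)
    (hΘunif : μ.map Θ = (ENNReal.ofReal (2 * π))⁻¹ • volume.restrict (Ioo (-π) π))
    (hindep : IndepFun R Θ μ)
    (X Y : Ω → ℝ)
    (hX : X = fun ω => R ω * Real.cos (Θ ω))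
    (hY : Y = fun ω => R ω * Real.sin (Θ ω))
    (F G : ℝ → ℝ)
    (hF : F = fun x => (μ {ω | R ω ≤ x}).toReal)
    (hG : G = fun x => (μ {ω | X ω ≤ x}).toReal)
    (w : ℝ → ℝ) (hw : ∀ x, 0 < w x)
    (l : Filter ℝ)
    (hendpoint : (l = atTop ∧ ∀ x, F x < 1) ∨
      (l = nhdsWithin 1 (Iio 1) ∧ (∀ x < 1, F x < 1) ∧ ∀ x, 1 ≤ x → F x = 1))
    (hGumbel : ∀ s : ℝ,
      Tendsto (fun u => (1 - F (u + s / w u)) / (1 - F u)) l (𝓝 (Real.exp (-s))))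
    (b a : ℕ → ℝ)
    (hb : ∀ n : ℕ, b n = sInf {x | 1 - 1 / (n : ℝ) < G x})
    (ha : ∀ n : ℕ, a n = 1 / w (b n))
    (ρ : ℝ) (hρ : ρ ∈ Ioo (0 : ℝ) 1) :
    ∀ x y : ℝ,
      Tendsto (fun n : ℕ =>
          ((μ {ω | X ω ≤ a n * x + b n ∧
            ρ * |X ω| + Real.sqrt (1 - ρ ^ 2) * Y ω ≤
              a n * y + b n + a n * Real.log 2}).toReal) ^ n)
        atTop (𝓝 (Real.exp (-Real.exp (-x)) * Real.exp (-Real.exp (-y)))) := by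
  obtain ⟨e, rfl, he⟩ := exists_eq_leftNhds hendpoint
  exact maxima_half_skew_gumbel_fixed_rho_independent_general μ R Θ hRm hΘm hRpos hΘunif hindep X Y
    hX hY F G hF hG w hw e he hGumbel b a hb ha ρ hρ
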